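/- arXiv:2007.05145 — 2 statements merged into one kernel-verified Lean document; each statement's English description precedes it below -/
import Mathlib

section
/- Let C be a class of binary classifiers on a countable domain X with VC dimension d ≥ 2, let P be a probability distribution on X, let T, n ∈ ℕ with n ≥ 1, let δ ∈ (0,1], and set ε := (9/(2n))·(d(T+1)·ln(2n) + ln(1/δ)). Then the probability over independent samples x ∼ P^n and z ∼ P^n that there exist h ∈ C and c = (c_1,…,c_T) ∈ C^T with rej_z(S(h,c)) > 2·rej_x(S(h,c)) + ε is at most δ. -/
open MeasureTheory

/-- A finite set `A` is shattered by `C` if every boolean labeling of `A` is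
realized by some member of `C`. -/
def Shatters {X : Type*} (C : Set (X → Bool)) (A : Finset X) : Prop :=
  ∀ b : X → Bool, ∃ g ∈ C, ∀ a ∈ A, g a = b a

/-- `C` has VC dimension `d`: some set of size `d` is shattered and no larger set is. -/
def VCDim {X : Type*} (C : Set (X → Bool)) (d : ℕ) : Prop :=
  (∃ A : Finset X, A.card = d ∧ Shatters C A) ∧ ∀ A : Finset X, Shatters C A → A.card ≤ d

/-!
Swapping `x i` and `z i` at a random set of coordinates preserves the law of `(x, z)`, so it is
enough to bound, for every fixed pair of samples, the fraction of swaps that produce a deviation.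
For one set `S`, a Chernoff bound for `n * (rej z - 2 * rej x)` does this: a coordinate pair with
exactly one point in `S` contributes the factor `(exp t + exp (-2 * t)) / 2` to the moment
generating function, which is at most `1` as long as `exp t` does not exceed the golden ratio, and
the other pairs contribute `1` or `exp (-t)`. The bad swaps of `S` depend only on the trace of `S` on the at
most `2 * n` sample points. The trace of an agreement set is determined by `T + 1` restricted
classifiers, each of which takes at most `(2 * n + 1) ^ d` values by the Sauer-Shelah lemma. A union
bound finishes the proof with `t = 4 / 9`, for which
`exp (-t * n * ε) = (2 * n) ^ (-2 * d * (T + 1)) * δ ^ 2`, since `2 * n + 1 ≤ (2 * n) ^ 2`.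
-/

section Averaging

lemma ncard_eq_sum_indicator {κ : Type*} [Fintype κ] (S : Set κ) :
    (S.ncard : ℝ) = ∑ s, S.indicator 1 s := by
  classical
  simp [Set.ncard_eq_toFinset_card', Set.indicator_apply]

lemma measureReal_le_of_forall_ncard_le {Ω κ : Type*} [MeasurableSpace Ω] [Fintype κ] [Nonempty κ]
    {μ : Measure Ω} [IsProbabilityMeasure μ] {φ : κ → Ω → Ω}
    (hφ : ∀ s, MeasurePreserving (φ s) μ μ) {E : Set Ω} (hE : NullMeasurableSet E μ) {δ : ℝ}
    (hδ : ∀ ω, ({s | φ s ω ∈ E}.ncard : ℝ) ≤ Fintype.card κ * δ) : μ.real E ≤ δ := by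
  have hpre (s : κ) : NullMeasurableSet (φ s ⁻¹' E) μ := hE.preimage (hφ s).quasiMeasurePreserving
  have hint (s : κ) : Integrable ((φ s ⁻¹' E).indicator (1 : Ω → ℝ)) μ :=
    (integrable_const 1).indicator₀ (hpre s)
  have hle : Fintype.card κ * μ.real E ≤ Fintype.card κ * δ :=
    calc Fintype.card κ * μ.real E = ∑ s, μ.real (φ s ⁻¹' E) := by
          simp [(hφ _).measureReal_preimage hE]
      _ = ∑ s, ∫ ω, (φ s ⁻¹' E).indicator 1 ω ∂μ := by
          simp [integral_indicator₀ (hpre _)]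
      _ = ∫ ω, ∑ s, (φ s ⁻¹' E).indicator 1 ω ∂μ := (integral_finsetSum _ fun s _ => hint s).symm
      _ ≤ ∫ _, Fintype.card κ * δ ∂μ := by
          refine integral_mono (integrable_finsetSum _ fun s _ => hint s) (integrable_const _)
            fun ω => ?_
          exact (ncard_eq_sum_indicator {s | φ s ω ∈ E}).symm.trans_le (hδ ω)
      _ = Fintype.card κ * δ := by simp
  exact le_of_mul_le_mul_left hle (by positivity)

end Averaging

section Symmetrization

variable {ι X : Type*}

/-- The pair of samples obtained from `ω` by exchanging the `i`-th points of the two samples for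
every `i` with `s i = true`; symmetrization averages over all `s`. -/
def coordSwap (s : ι → Bool) (ω : (ι → X) × (ι → X)) : (ι → X) × (ι → X) :=
  (fun i => if s i then ω.2 i else ω.1 i, fun i => if s i then ω.1 i else ω.2 i)

lemma measurePreserving_coordSwap [Fintype ι] [MeasurableSpace X] (P : ι → Measure X)
    [∀ i, SigmaFinite (P i)] (s : ι → Bool) :
    MeasurePreserving (coordSwap s) ((Measure.pi P).prod (Measure.pi P))
      ((Measure.pi P).prod (Measure.pi P)) := by
  let swapAt (i : ι) : X × X → X × X := if s i then Prod.swap else id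
  have hswapAt (i : ι) :
      MeasurePreserving (swapAt i) ((P i).prod (P i)) ((P i).prod (P i)) := by
    by_cases hs : s i
    · simpa only [swapAt, if_pos hs] using Measure.measurePreserving_swap
    · simpa only [swapAt, if_neg hs] using MeasurePreserving.id _
  have hzip := measurePreserving_arrowProdEquivProdArrow X X ι P P
  convert hzip.comp ((measurePreserving_pi _ _ hswapAt).comp hzip.symm) using 1
  ext ω i <;> cases hs : s i <;>
    simp [coordSwap, swapAt, hs, MeasurableEquiv.arrowProdEquivProdArrow,
      Equiv.arrowProdEquivProdArrow]

end Symmetrization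

section Chernoff

open Real goldenRatio

lemma ncard_le_sum_le_exp_neg_mul_prod {ι κ : Type*} [Fintype ι] [Fintype κ]
    (f : ι → κ → ℝ) (e : ℝ) :
    ({s : ι → κ | e ≤ ∑ i, f i (s i)}.ncard : ℝ) ≤ exp (-e) * ∏ i, ∑ b, exp (f i b) := by
  classical
  calc ({s : ι → κ | e ≤ ∑ i, f i (s i)}.ncard : ℝ)
      = ∑ s, {s : ι → κ | e ≤ ∑ i, f i (s i)}.indicator 1 s := ncard_eq_sum_indicator _
    _ ≤ ∑ s : ι → κ, exp (-e) * ∏ i, exp (f i (s i)) := by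
        refine Finset.sum_le_sum fun s _ =>
          Set.indicator_apply_le' (fun hs => ?_) fun _ => by positivity
        rw [← exp_sum, ← exp_add]
        exact one_le_exp (neg_add_eq_sub e _ ▸ sub_nonneg.2 hs)
    _ = exp (-e) * ∏ i, ∑ b, exp (f i b) := by
        rw [← Finset.mul_sum, Finset.prod_univ_sum, Fintype.piFinset_univ]

lemma exp_add_exp_neg_two_mul_le_two {t : ℝ} (ht0 : 0 ≤ t) (ht : exp t ≤ φ) :
    exp t + exp (-(2 * t)) ≤ 2 := by
  have hone : 1 ≤ exp t := one_le_exp ht0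
  have hsq : exp t ^ 2 ≤ exp t + 1 := by
    nlinarith [goldenRatio_sq, one_lt_goldenRatio]
  have hinv : exp (-(2 * t)) * exp t ^ 2 = 1 := by
    rw [← exp_nat_mul, ← exp_add]
    simp
  have hcubic : (exp t + exp (-(2 * t)) - 2) * exp t ^ 2 ≤ 0 :=
    calc (exp t + exp (-(2 * t)) - 2) * exp t ^ 2
        = (exp t - 1) * (exp t ^ 2 - (exp t + 1)) := by linear_combination hinv
      _ ≤ 0 := mul_nonpos_of_nonneg_of_nonpos (by linarith) (by linarith)
  linarith [nonpos_of_mul_nonpos_left hcubic (by positivity)]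

lemma exp_mul_sub_add_exp_mul_sub_le_two {t u v : ℝ} (ht0 : 0 ≤ t) (ht : exp t ≤ φ)
    (hu : u = 0 ∨ u = 1) (hv : v = 0 ∨ v = 1) :
    exp (t * (u - 2 * v)) + exp (t * (v - 2 * u)) ≤ 2 := by
  have hneg : exp (-t) ≤ 1 := exp_le_one_iff.2 (by linarith)
  have hgold := exp_add_exp_neg_two_mul_le_two ht0 ht
  rcases hu with rfl | rfl <;> rcases hv with rfl | rfl <;>
    ring_nf at * <;> linarith [exp_zero]

lemma exp_four_ninths_le_goldenRatio : exp (4 / 9) ≤ φ :=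
  calc exp (4 / 9) = exp (1 / 9) ^ 4 := by rw [← exp_nat_mul]; norm_num
    _ ≤ (1 / (1 - 1 / 9)) ^ 4 := by
        gcongr
        exact exp_bound_div_one_sub_of_interval (by norm_num) (by norm_num)
    _ ≤ (1 + 2.21) / 2 := by norm_num
    _ ≤ φ := by
        have hsqrt : 2.21 ≤ √5 := le_sqrt_of_sq_le (by norm_num)
        unfold goldenRatio
        gcongr

end Chernoff

section Deviation

open Real goldenRatio

variable {X : Type*} {n : ℕ}

/-- The empirical rejection rate `rej_x(S)`: the fraction of the sample points `x i` outside `S`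
(with value `0` on the empty sample). -/
noncomputable def rejectionRate (x : Fin n → X) (S : Set X) : ℝ :=
  {i | x i ∉ S}.ncard / n

lemma card_mul_rejectionRate (x : Fin n → X) (S : Set X) :
    n * rejectionRate x S = ∑ i, Sᶜ.indicator 1 (x i) := by
  have hcount : ({i | x i ∉ S}.ncard : ℝ) = ∑ i, Sᶜ.indicator 1 (x i) :=
    ncard_eq_sum_indicator {i | x i ∉ S}
  rcases n.eq_zero_or_pos with rfl | hn
  · simp
  · rw [rejectionRate, hcount, mul_div_cancel₀ _ (by positivity)]

lemma rejectionRate_inter_of_forall_mem {x : Fin n → X} {A : Set X} (hx : ∀ i, x i ∈ A)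
    (S : Set X) : rejectionRate x (A ∩ S) = rejectionRate x S := by
  simp [rejectionRate, hx]

/-- The pairs of samples on which some set of the family `𝒮` has a rejection rate on the second
sample exceeding twice its rejection rate on the first one by more than `ε`; for the family of
agreement sets this is the event of the theorem. -/
def deviationEvent (𝒮 : Set (Set X)) (n : ℕ) (ε : ℝ) : Set ((Fin n → X) × (Fin n → X)) :=
  {ω | ∃ S ∈ 𝒮, 2 * rejectionRate ω.1 S + ε < rejectionRate ω.2 S}

lemma ncard_coordSwap_deviation_le {t : ℝ} (ht0 : 0 ≤ t) (ht : exp t ≤ φ)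
    (ω : (Fin n → X) × (Fin n → X)) (S : Set X) (ε : ℝ) :
    ({s | 2 * rejectionRate (coordSwap s ω).1 S + ε <
      rejectionRate (coordSwap s ω).2 S}.ncard : ℝ) ≤ exp (-(t * (n * ε))) * 2 ^ n := by
  let r : X → ℝ := Sᶜ.indicator 1
  have hr (a : X) : r a = 0 ∨ r a = 1 := Set.indicator_eq_zero_or_self Sᶜ 1 a
  let excess (i : Fin n) (b : Bool) : ℝ :=
    t * (r (if b then ω.1 i else ω.2 i) - 2 * r (if b then ω.2 i else ω.1 i))
  have hexcess (s : Fin n → Bool) : ∑ i, excess i (s i) =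
      t * (n * (rejectionRate (coordSwap s ω).2 S - 2 * rejectionRate (coordSwap s ω).1 S)) := by
    simp only [mul_sub, mul_left_comm (n : ℝ) 2, card_mul_rejectionRate]
    simp only [Finset.mul_sum, ← Finset.sum_sub_distrib, mul_sub, excess, r, coordSwap]
  have hsub : {s | 2 * rejectionRate (coordSwap s ω).1 S + ε <
      rejectionRate (coordSwap s ω).2 S} ⊆ {s | t * (n * ε) ≤ ∑ i, excess i (s i)} := by
    intro s hs
    change t * (n * ε) ≤ ∑ i, excess i (s i)
    rw [hexcess]
    gcongr
    exact (lt_sub_iff_add_lt'.2 hs).le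
  have hpair (i : Fin n) : ∑ b, exp (excess i b) ≤ 2 := by
    simpa [excess] using exp_mul_sub_add_exp_mul_sub_le_two ht0 ht (hr (ω.1 i)) (hr (ω.2 i))
  have hprod : ∏ i, ∑ b, exp (excess i b) ≤ 2 ^ n := by
    simpa using Finset.prod_le_prod (s := Finset.univ) (fun i _ => by positivity)
      fun i _ => hpair i
  refine (Nat.cast_le.2 (Set.ncard_le_ncard hsub)).trans ?_
  exact (ncard_le_sum_le_exp_neg_mul_prod excess _).trans (by gcongr)

lemma ncard_coordSwap_mem_deviationEvent_le {𝒮 : Set (Set X)} {N : ℕ}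
    (hN : ∀ A : Finset X, A.card ≤ 2 * n → (((A : Set X) ∩ ·) '' 𝒮).ncard ≤ N)
    {t : ℝ} (ht0 : 0 ≤ t) (ht : exp t ≤ φ) (ω : (Fin n → X) × (Fin n → X)) (ε : ℝ) :
    ({s | coordSwap s ω ∈ deviationEvent 𝒮 n ε}.ncard : ℝ) ≤
      N * (exp (-(t * (n * ε))) * 2 ^ n) := by
  classical
  let A : Finset X := Finset.univ.image ω.1 ∪ Finset.univ.image ω.2
  have hA : A.card ≤ 2 * n :=
    calc A.card ≤ _ := Finset.card_union_le _ _
      _ ≤ n + n := by gcongr <;> exact Finset.card_image_le.trans_eq (Finset.card_fin n)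
      _ = 2 * n := (two_mul n).symm
  have hmem (s : Fin n → Bool) (i : Fin n) :
      (coordSwap s ω).1 i ∈ (A : Set X) ∧ (coordSwap s ω).2 i ∈ (A : Set X) := by
    cases hs : s i <;> simp [coordSwap, A, hs]
  have htraces : (((A : Set X) ∩ ·) '' 𝒮).Finite :=
    A.finite_toSet.finite_subsets.subset (by rintro _ ⟨S, -, rfl⟩; exact Set.inter_subset_left)
  let badSwaps (B : Set X) : Set (Fin n → Bool) :=
    {s | 2 * rejectionRate (coordSwap s ω).1 B + ε < rejectionRate (coordSwap s ω).2 B}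
  have hcover : {s | coordSwap s ω ∈ deviationEvent 𝒮 n ε} ⊆
      ⋃ B ∈ htraces.toFinset, badSwaps B := by
    rintro s ⟨S, hS, hdev⟩
    refine Set.mem_biUnion (x := (A : Set X) ∩ S) (by simpa using ⟨S, hS, rfl⟩) ?_
    rwa [← rejectionRate_inter_of_forall_mem (fun i => (hmem s i).1) S,
      ← rejectionRate_inter_of_forall_mem (fun i => (hmem s i).2) S] at hdev
  calc ({s | coordSwap s ω ∈ deviationEvent 𝒮 n ε}.ncard : ℝ)
      ≤ ∑ B ∈ htraces.toFinset, ((badSwaps B).ncard : ℝ) := by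
        exact_mod_cast (Set.ncard_le_ncard hcover).trans (Finset.set_ncard_biUnion_le _ _)
    _ ≤ htraces.toFinset.card • (exp (-(t * (n * ε))) * 2 ^ n) :=
        Finset.sum_le_card_nsmul _ _ _ fun B _ => ncard_coordSwap_deviation_le ht0 ht ω B ε
    _ ≤ N * (exp (-(t * (n * ε))) * 2 ^ n) := by
        rw [nsmul_eq_mul, ← Set.ncard_eq_toFinset_card _ htraces]
        gcongr
        exact hN A hA

theorem measureReal_deviationEvent_le [MeasurableSpace X] {𝒮 : Set (Set X)} {N : ℕ}
    (hN : ∀ A : Finset X, A.card ≤ 2 * n → (((A : Set X) ∩ ·) '' 𝒮).ncard ≤ N)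
    {t : ℝ} (ht0 : 0 ≤ t) (ht : exp t ≤ φ) (P : Fin n → Measure X)
    [∀ i, IsProbabilityMeasure (P i)] {ε : ℝ}
    (hE : NullMeasurableSet (deviationEvent 𝒮 n ε) ((Measure.pi P).prod (Measure.pi P))) :
    ((Measure.pi P).prod (Measure.pi P)).real (deviationEvent 𝒮 n ε) ≤
      N * exp (-(t * (n * ε))) := by
  refine measureReal_le_of_forall_ncard_le (measurePreserving_coordSwap P) hE fun ω => ?_
  refine (ncard_coordSwap_mem_deviationEvent_le hN ht0 ht ω ε).trans_eq ?_
  simp only [Fintype.card_fun, Fintype.card_bool, Fintype.card_fin, Nat.cast_pow, Nat.cast_ofNat]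
  ring

end Deviation

section VapnikChervonenkis

variable {X : Type*}

lemma sum_range_choose_le_add_one_pow (m d : ℕ) :
    ∑ k ∈ Finset.range (d + 1), m.choose k ≤ (m + 1) ^ d := by
  calc ∑ k ∈ Finset.range (d + 1), m.choose k
      ≤ ∑ k ∈ Finset.range (d + 1), m ^ k * 1 ^ (d - k) * d.choose k := by
        refine Finset.sum_le_sum fun k hk => ?_
        rw [one_pow, mul_one]
        exact (m.choose_le_pow k).trans
          (Nat.le_mul_of_pos_right _ (Nat.choose_pos (Finset.mem_range_succ_iff.1 hk)))
    _ = (m + 1) ^ d := (add_pow m 1 d).symm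

lemma Shatters.of_finset_shatters {C : Set (X → Bool)} {A : Finset X} [DecidableEq A]
    {𝒜 : Finset (Finset A)} (h𝒜 : ∀ B ∈ 𝒜, ∃ g ∈ C, ∀ a : A, g a = decide (a ∈ B))
    {s : Finset A} (hs : 𝒜.Shatters s) :
    Shatters C (s.map (Function.Embedding.subtype _)) := by
  intro b
  obtain ⟨B, hB, hsB⟩ := hs (Finset.filter_subset (fun a : A => b a) s)
  obtain ⟨g, hg, hgB⟩ := h𝒜 B hB
  refine ⟨g, hg, fun a ha => ?_⟩
  obtain ⟨a, has, rfl⟩ := Finset.mem_map.1 ha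
  have hab : a ∈ B ↔ b a := by simpa [has] using Finset.ext_iff.1 hsB a
  simp [hgB, hab]

theorem ncard_restrict_image_le {C : Set (X → Bool)} {d : ℕ}
    (hC : ∀ A : Finset X, Shatters C A → A.card ≤ d) (A : Finset X) :
    (A.restrict '' C).ncard ≤ (A.card + 1) ^ d := by
  classical
  let positives (f : A → Bool) : Finset A := {a | f a}
  have hpositives (f : A → Bool) (a : A) : a ∈ positives f ↔ f a := Finset.mem_filter_univ a
  have hinj : Function.Injective positives := fun f g hfg => by
    funext a
    rw [Bool.eq_iff_iff, ← hpositives, ← hpositives, hfg]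
  let 𝒜 : Finset (Finset A) := (A.restrict '' C).toFinset.image positives
  have h𝒜 : ∀ B ∈ 𝒜, ∃ g ∈ C, ∀ a : A, g a = decide (a ∈ B) := by
    intro B hB
    obtain ⟨_, hf, rfl⟩ := Finset.mem_image.1 hB
    obtain ⟨g, hg, rfl⟩ := Set.mem_toFinset.1 hf
    exact ⟨g, hg, fun a => by simp [hpositives]⟩
  have hdim : 𝒜.vcDim ≤ d := Finset.sup_le fun s hs => by
    simpa using hC _ (Shatters.of_finset_shatters h𝒜 (Finset.mem_shatterer.1 hs))
  calc (A.restrict '' C).ncard = 𝒜.card := by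
        rw [Finset.card_image_of_injective _ hinj, Set.ncard_eq_toFinset_card']
    _ ≤ 𝒜.shatterer.card := 𝒜.card_le_card_shatterer
    _ ≤ ∑ k ∈ Finset.Iic 𝒜.vcDim, (Fintype.card A).choose k := Finset.card_shatterer_le_sum_vcDim
    _ ≤ ∑ k ∈ Finset.range (d + 1), A.card.choose k := by
        rw [Fintype.card_coe]
        exact Finset.sum_le_sum_of_subset fun k hk =>
          Finset.mem_range_succ_iff.2 ((Finset.mem_Iic.1 hk).trans hdim)
    _ ≤ (A.card + 1) ^ d := sum_range_choose_le_add_one_pow _ _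

end VapnikChervonenkis

section Agreement

variable {X α : Type*}

/-- The agreement set `S(h, c)` of a classifier `h` and a tuple `c`; it makes sense for arbitrary
labels `α` and index types `ι`. -/
def agreementSet {ι : Type*} (h : X → α) (c : ι → X → α) : Set X :=
  {a | ∀ j, c j a = h a}

/-- The family of all agreement sets `S(h, c)` with `h ∈ C` and `c ∈ C ^ ι`. -/
def agreementFamily (C : Set (X → α)) (ι : Type*) : Set (Set X) :=
  {S | ∃ h ∈ C, ∃ c : ι → X → α, (∀ j, c j ∈ C) ∧ agreementSet h c = S}

lemma ncard_inter_image_agreementFamily_le [Finite α] (C : Set (X → α)) (ι : Type*) [Fintype ι]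
    (A : Finset X) :
    (((A : Set X) ∩ ·) '' agreementFamily C ι).ncard ≤
      (A.restrict '' C).ncard ^ (Fintype.card ι + 1) := by
  let R : Set (A → α) := A.restrict '' C
  let agreement (p : R × (ι → R)) : Set X :=
    (↑) '' agreementSet (p.1 : A → α) fun j => (p.2 j : A → α)
  have hsub : ((A : Set X) ∩ ·) '' agreementFamily C ι ⊆ Set.range agreement := by
    rintro _ ⟨_, ⟨h, hh, c, hc, rfl⟩, rfl⟩
    refine ⟨(⟨A.restrict h, h, hh, rfl⟩, fun j => ⟨A.restrict (c j), c j, hc j, rfl⟩), ?_⟩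
    ext a
    simp [agreement, agreementSet, and_comm]
  calc _ ≤ (Set.range agreement).ncard := Set.ncard_le_ncard hsub
    _ ≤ Nat.card (R × (ι → R)) := Finite.card_range_le agreement
    _ = R.ncard ^ (Fintype.card ι + 1) := by
        rw [Nat.card_prod, Nat.card_fun, Nat.card_eq_fintype_card (α := ι), pow_succ',
          Nat.card_coe_set_eq]

lemma deviationEvent_agreementFamily (C : Set (X → α)) (ι : Type*) (n : ℕ) (ε : ℝ) :
    deviationEvent (agreementFamily C ι) n ε =
      {ω | ∃ h ∈ C, ∃ c : ι → X → α, (∀ j, c j ∈ C) ∧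
        2 * rejectionRate ω.1 (agreementSet h c) + ε < rejectionRate ω.2 (agreementSet h c)} := by
  ext ω
  constructor
  · rintro ⟨_, ⟨h, hh, c, hc, rfl⟩, hdev⟩
    exact ⟨h, hh, c, hc, hdev⟩
  · rintro ⟨h, hh, c, hc, hdev⟩
    exact ⟨_, ⟨h, hh, c, hc, rfl⟩, hdev⟩

end Agreement

section ConfidenceLevel

open Real

lemma pow_mul_exp_neg_le_of_confidence {n : ℕ} (hn : 1 ≤ n) (k : ℕ) {δ ε : ℝ} (hδ0 : 0 < δ)
    (hδ1 : δ ≤ 1) (hε : ε = 9 / (2 * n) * (k * log (2 * n) + log (1 / δ))) :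
    (2 * n + 1 : ℝ) ^ k * exp (-(4 / 9 * (n * ε))) ≤ δ := by
  have hn1 : (1 : ℝ) ≤ n := by exact_mod_cast hn
  have hexponent : -(4 / 9 * (n * ε)) = -(k * log ((2 * n) ^ 2)) + 2 * log δ := by
    rw [hε, one_div δ, log_inv, log_pow]
    field_simp
    ring
  have hpow : exp (k * log ((2 * n) ^ 2)) = ((2 * n : ℝ) ^ 2) ^ k := by
    rw [exp_nat_mul, exp_log (by positivity)]
  calc (2 * n + 1 : ℝ) ^ k * exp (-(4 / 9 * (n * ε)))
      ≤ ((2 * n : ℝ) ^ 2) ^ k * exp (-(4 / 9 * (n * ε))) := by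
        gcongr
        nlinarith
    _ = exp (2 * log δ) := by
        rw [hexponent, ← hpow, ← exp_add, add_neg_cancel_left]
    _ ≤ exp (log δ) := exp_le_exp.2 (by linarith [log_nonpos hδ0.le hδ1])
    _ = δ := exp_log hδ0

end ConfidenceLevel

theorem stmt7_general {X : Type*} [MeasurableSpace X] {C : Set (X → Bool)} {d : ℕ}
    (hC : ∀ A : Finset X, Shatters C A → A.card ≤ d) {T n : ℕ} (hn : 1 ≤ n)
    (P : Fin n → Measure X) [∀ i, IsProbabilityMeasure (P i)]
    {δ : ℝ} (hδ0 : 0 < δ) (hδ1 : δ ≤ 1) {ε : ℝ}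
    (hε : ε = 9 / (2 * n) * (d * (T + 1) * Real.log (2 * n) + Real.log (1 / δ)))
    (hE : NullMeasurableSet (deviationEvent (agreementFamily C (Fin T)) n ε)
      ((Measure.pi P).prod (Measure.pi P))) :
    ((Measure.pi P).prod (Measure.pi P)).real (deviationEvent (agreementFamily C (Fin T)) n ε) ≤
      δ := by
  have htraces (A : Finset X) (hA : A.card ≤ 2 * n) :
      (((A : Set X) ∩ ·) '' agreementFamily C (Fin T)).ncard ≤ (2 * n + 1) ^ (d * (T + 1)) :=
    calc _ ≤ (A.restrict '' C).ncard ^ (T + 1) := by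
          simpa using ncard_inter_image_agreementFamily_le C (Fin T) A
      _ ≤ ((2 * n + 1) ^ d) ^ (T + 1) := by
          gcongr
          exact (ncard_restrict_image_le hC A).trans (by gcongr)
      _ = (2 * n + 1) ^ (d * (T + 1)) := (pow_mul _ _ _).symm
  have htail := measureReal_deviationEvent_le htraces (by norm_num)
    exp_four_ninths_le_goldenRatio P hE
  push_cast at htail
  exact htail.trans (pow_mul_exp_neg_le_of_confidence hn _ hδ0 hδ1 (by exact_mod_cast hε))

/-- for a class `C` of VC dimension `d ≥ 2`, distribution `P`, `T, n ∈ ℕ`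
with `n ≥ 1`, `δ ∈ (0,1]`, and `ε = (9/(2n))(d(T+1)ln(2n) + ln(1/δ))`: the probability
over `x, z ∼ Pⁿ` that some `h ∈ C`, `c ∈ C^T` have
`rej_z(S(h,c)) > 2·rej_x(S(h,c)) + ε` is at most `δ`. -/
theorem stmt7 {X : Type*} [Countable X] [MeasurableSpace X] [MeasurableSingletonClass X]
    (C : Set (X → Bool)) (d : ℕ) (hd : 2 ≤ d) (hC : VCDim C d)
    (P : Measure X) [IsProbabilityMeasure P] (T n : ℕ) (hn : 1 ≤ n)
    (δ : ℝ) (hδ0 : 0 < δ) (hδ1 : δ ≤ 1) (ε : ℝ)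
    (hε : ε = (9 / (2 * (n : ℝ))) *
      ((d : ℝ) * ((T : ℝ) + 1) * Real.log (2 * n) + Real.log (1 / δ))) :
    (((Measure.pi fun _ : Fin n => P).prod (Measure.pi fun _ : Fin n => P))
      {ω : (Fin n → X) × (Fin n → X) | ∃ h ∈ C, ∃ c : Fin T → X → Bool, (∀ i, c i ∈ C) ∧
        2 * ((Set.ncard {i : Fin n | ω.1 i ∉ {a : X | ∀ j, c j a = h a}} : ℝ) / n) + ε <
          (Set.ncard {i : Fin n | ω.2 i ∉ {a : X | ∀ j, c j a = h a}} : ℝ) / n}).toReal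
      ≤ δ := by
  have hgen := stmt7_general hC.2 hn (fun _ => P) hδ0 hδ1 hε
    (Set.to_countable _).measurableSet.nullMeasurableSet
  rwa [deviationEvent_agreementFamily] at hgen
end

section
/- Let C be a class of binary classifiers on a countable domain X with VC dimension d ≥ 2, let n ≥ 1, let δ > 0, let ε ≥ 8·ln(8/δ)/n + √(8d·ln(2n)/n), let T ≤ 1/ε be a positive integer, let f, h ∈ C, and let Q be any probability distribution on X. Then the probability over z ∼ Q^n that there exists c = (c_1,…,c_T) ∈ C^T with err_Q(h|_{S(h,c)}, f) > 2ε and err_z(h|_{S(h,c)}, f) ≤ ε is at most δ. -/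
open MeasureTheory

/-! Draw a ghost sample `z'` alongside `z`. For a fixed error set `D`, weight a pair `(x, y)` by
`exp (t (1_D y - 1_D x) - t² (1_D x + 1_D y) / 2)`. Because `cosh t ≤ exp (t² / 2)`, this weight is
at most `1` on average over the two orders of the pair, so after random swaps of `z i` with `z' i`
the largest product of weights over all error sets has expectation at most the number of traces that
error sets leave on the `2n` points. By Sauer-Shelah that number is at most `(2n) ^ (d T)`. If some
error set has mass more than `2ε` but empirical mass at most `ε`, then, by Jensen's inequality, the
product of its weights is at least `exp (n ε / 8)` on average over the ghost sample (for
`t = 1 / 2`), and Markov's inequality finishes the proof. -/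

open scoped ENNReal

section Traces

variable {X : Type*}

open Classical in
/-- The traces of a family `𝓓` of sets on a finite set `P`, i.e. the sets `D ∩ P` with `D ∈ 𝓓`, as
finsets: the growth function of `𝓓` at `m` is the largest number of traces on `m` points. -/
noncomputable def traces (𝓓 : Set (Set X)) (P : Finset X) : Finset (Finset X) :=
  {B ∈ P.powerset | ∃ D ∈ 𝓓, ∀ a ∈ P, a ∈ B ↔ a ∈ D}

lemma mem_traces {𝓓 : Set (Set X)} {P B : Finset X} :
    B ∈ traces 𝓓 P ↔ B ⊆ P ∧ ∃ D ∈ 𝓓, ∀ a ∈ P, a ∈ B ↔ a ∈ D := by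
  simp only [traces, Finset.mem_filter, Finset.mem_powerset]

lemma exists_mem_traces {𝓓 : Set (Set X)} {D : Set X} (hD : D ∈ 𝓓) (P : Finset X) :
    ∃ B ∈ traces 𝓓 P, ∀ a ∈ P, a ∈ B ↔ a ∈ D := by
  classical
  have htrace : ∀ a ∈ P, a ∈ P.filter (· ∈ D) ↔ a ∈ D := fun a ha => by
    simp only [Finset.mem_filter, ha, true_and]
  exact ⟨P.filter (· ∈ D), mem_traces.2 ⟨P.filter_subset _, D, hD, htrace⟩, htrace⟩

/-- The sets `{g = 1}` for `g` in a class `C` of classifiers, through which `C` is viewed as a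
family of sets. -/
def positiveSets (C : Set (X → Bool)) : Set (Set X) :=
  (fun g => {a | g a = true}) '' C

/-- The error sets `{a ∈ S(h, c) | h a ≠ f a}` of the selective classifiers `h|_{S(h, c)}`, where
`c` ranges over the families in `C` indexed by `κ`. -/
def errorSets (C : Set (X → Bool)) (f h : X → Bool) (κ : Type*) : Set (Set X) :=
  {E | ∃ c : κ → X → Bool, (∀ j, c j ∈ C) ∧ E = {a | h a ≠ f a ∧ ∀ j, c j a = h a}}

lemma card_traces_errorSets_le (C : Set (X → Bool)) (f h : X → Bool) (κ : Type*) [Fintype κ]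
    (P : Finset X) :
    (traces (errorSets C f h κ) P).card ≤ (traces (positiveSets C) P).card ^ Fintype.card κ := by
  classical
  have hsub : traces (errorSets C f h κ) P ⊆
      (Fintype.piFinset fun _ : κ => traces (positiveSets C) P).image fun B =>
        {a ∈ P | h a ≠ f a ∧ ∀ j, a ∈ B j ↔ h a = true} := by
    intro A hA
    obtain ⟨hAP, _, ⟨c, hc, rfl⟩, hAc⟩ := mem_traces.1 hA
    choose B hB hBc using fun j =>
      exists_mem_traces (Set.mem_image_of_mem (fun g => {a | g a = true}) (hc j)) P
    refine Finset.mem_image.2 ⟨B, Fintype.mem_piFinset.2 hB, ?_⟩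
    ext a
    rw [Finset.mem_filter]
    have hiff (ha : a ∈ P) : (h a ≠ f a ∧ ∀ j, a ∈ B j ↔ h a = true) ↔ a ∈ A := by
      rw [hAc a ha]
      exact and_congr_right fun _ => forall_congr' fun j =>
        (iff_congr (hBc j a ha) Iff.rfl).trans Bool.eq_iff_iff.symm
    exact ⟨fun ha => (hiff ha.1).1 ha.2, fun ha => ⟨hAP ha, (hiff (hAP ha)).2 ha⟩⟩
  calc (traces (errorSets C f h κ) P).card
      ≤ (Fintype.piFinset fun _ : κ => traces (positiveSets C) P).card :=
        (Finset.card_le_card hsub).trans Finset.card_image_le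
    _ = (traces (positiveSets C) P).card ^ Fintype.card κ := by
        rw [Fintype.card_piFinset, Finset.prod_const, Finset.card_univ]

end Traces

section SauerShelah

variable {X : Type*}

lemma shatters_of_traces_positiveSets_shatters [DecidableEq X] {C : Set (X → Bool)} {P A : Finset X}
    (hA : (traces (positiveSets C) P).Shatters A) : A ⊆ P ∧ Shatters C A := by
  obtain ⟨B, hB, hAB⟩ := hA.exists_superset
  have hAP : A ⊆ P := hAB.trans (mem_traces.1 hB).1
  refine ⟨hAP, fun b => ?_⟩
  obtain ⟨U, hU, hAU⟩ := hA (A.filter_subset (b · = true))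
  obtain ⟨-, _, ⟨g, hg, rfl⟩, hUg⟩ := mem_traces.1 hU
  refine ⟨g, hg, fun a ha => Bool.eq_iff_iff.2 ?_⟩
  have hUb : a ∈ U ↔ b a = true := by
    simpa only [Finset.mem_inter, Finset.mem_filter, ha, true_and] using Finset.ext_iff.1 hAU a
  exact (hUg a (hAP ha)).symm.trans hUb

lemma card_traces_positiveSets_le_sum_choose {C : Set (X → Bool)} {d : ℕ}
    (hC : ∀ A : Finset X, Shatters C A → A.card ≤ d) (P : Finset X) :
    (traces (positiveSets C) P).card ≤ ∑ k ∈ Finset.range (d + 1), P.card.choose k := by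
  classical
  have hsub : (traces (positiveSets C) P).shatterer ⊆
      (Finset.range (d + 1)).biUnion fun k => P.powersetCard k := by
    intro A hA
    obtain ⟨hAP, hCA⟩ := shatters_of_traces_positiveSets_shatters (Finset.mem_shatterer.1 hA)
    simp only [Finset.mem_biUnion, Finset.mem_range, Finset.mem_powersetCard]
    exact ⟨A.card, Nat.lt_succ_of_le (hC A hCA), hAP, rfl⟩
  calc (traces (positiveSets C) P).card
      ≤ (traces (positiveSets C) P).shatterer.card := Finset.card_le_card_shatterer _
    _ ≤ ((Finset.range (d + 1)).biUnion fun k => P.powersetCard k).card :=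
        Finset.card_le_card hsub
    _ ≤ ∑ k ∈ Finset.range (d + 1), (P.powersetCard k).card := Finset.card_biUnion_le
    _ = ∑ k ∈ Finset.range (d + 1), P.card.choose k := by simp only [Finset.card_powersetCard]

lemma two_mul_choose_le_pow (m : ℕ) {k : ℕ} (hk : 2 ≤ k) : 2 * m.choose k ≤ m ^ k :=
  calc 2 * m.choose k ≤ k.factorial * m.choose k := by
        gcongr
        exact Nat.factorial_le hk
    _ = m.descFactorial k := (Nat.descFactorial_eq_factorial_mul_choose m k).symm
    _ ≤ m ^ k := Nat.descFactorial_le_pow m k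

lemma sum_range_choose_le_pow {m d : ℕ} (hm : 2 ≤ m) (hd : 2 ≤ d) :
    ∑ k ∈ Finset.range (d + 1), m.choose k ≤ m ^ d := by
  induction d, hd using Nat.le_induction with
  | base =>
    have hchoose : 2 * m.choose 2 + m = m * m := by
      obtain ⟨k, rfl⟩ := Nat.exists_eq_add_of_le' (one_le_two.trans hm)
      rw [Nat.choose_two_right, Nat.mul_div_cancel' (Nat.even_mul_pred_self _).two_dvd,
        Nat.add_sub_cancel]
      ring
    simp only [Finset.sum_range_succ, Finset.sum_range_zero, Nat.choose_zero_right,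
      Nat.choose_one_right]
    nlinarith
  | succ d hd ih =>
    have hchoose := two_mul_choose_le_pow m (show 2 ≤ d + 1 by omega)
    have hpow : 2 * m ^ d ≤ m ^ (d + 1) := by rw [pow_succ']; gcongr
    rw [Finset.sum_range_succ]
    omega

lemma card_traces_positiveSets_le_pow {C : Set (X → Bool)} {d m : ℕ} (hd : 2 ≤ d)
    (hC : ∀ A : Finset X, Shatters C A → A.card ≤ d) (hm : 2 ≤ m) {P : Finset X}
    (hP : P.card ≤ m) : (traces (positiveSets C) P).card ≤ m ^ d :=
  calc (traces (positiveSets C) P).card ≤ ∑ k ∈ Finset.range (d + 1), P.card.choose k :=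
        card_traces_positiveSets_le_sum_choose hC P
    _ ≤ ∑ k ∈ Finset.range (d + 1), m.choose k := by gcongr
    _ ≤ m ^ d := sum_range_choose_le_pow hm hd

end SauerShelah

section PairWeight

variable {X : Type*}

/-- The weight `exp (t (1_D y - 1_D x) - t² (1_D x + 1_D y) / 2)` of a pair `(x, y)`, where `x` is
an actual sample point and `y` a ghost sample point. The quadratic term is chosen so that the two
orders of a pair have average weight at most `1`. -/
noncomputable def pairWeight (t : ℝ) (D : Set X) (p : X × X) : ℝ≥0∞ :=
  ENNReal.ofReal (Real.exp (t * (D.indicator 1 p.2 - D.indicator 1 p.1) -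
    t ^ 2 / 2 * (D.indicator 1 p.1 + D.indicator 1 p.2)))

lemma pairWeight_congr (t : ℝ) {D E : Set X} {p : X × X} (h₁ : p.1 ∈ D ↔ p.1 ∈ E)
    (h₂ : p.2 ∈ D ↔ p.2 ∈ E) : pairWeight t D p = pairWeight t E p := by
  classical simp only [pairWeight, Set.indicator_apply, h₁, h₂]

lemma measurable_pairWeight [MeasurableSpace X] (t : ℝ) {D : Set X} (hD : MeasurableSet D) :
    Measurable (pairWeight t D) := by
  have : Measurable (D.indicator (1 : X → ℝ)) := measurable_one.indicator hD
  unfold pairWeight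
  fun_prop

lemma exp_sub_add_exp_neg_sub_le_two {x s : ℝ} (h : x ^ 2 / 2 ≤ s) :
    Real.exp (x - s) + Real.exp (-x - s) ≤ 2 :=
  calc Real.exp (x - s) + Real.exp (-x - s) = 2 * Real.cosh x * Real.exp (-s) := by
        rw [Real.cosh_eq, sub_eq_add_neg, sub_eq_add_neg, Real.exp_add, Real.exp_add]
        ring
    _ ≤ 2 * Real.exp s * Real.exp (-s) := by
        gcongr
        exact (Real.cosh_le_exp_half_sq x).trans (Real.exp_le_exp.2 h)
    _ = 2 := by rw [mul_assoc, ← Real.exp_add, add_neg_cancel, Real.exp_zero, mul_one]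

lemma pairWeight_add_pairWeight_swap_le_two (t : ℝ) (D : Set X) (p : X × X) :
    pairWeight t D p + pairWeight t D p.swap ≤ 2 := by
  set u : ℝ := D.indicator 1 p.1 with hu
  set v : ℝ := D.indicator 1 p.2 with hv
  have hsq : (v - u) ^ 2 ≤ u + v := by
    rw [hu, hv]
    by_cases h₁ : p.1 ∈ D <;> by_cases h₂ : p.2 ∈ D <;> simp [h₁, h₂]
  have hexp : Real.exp (t * (v - u) - t ^ 2 / 2 * (u + v)) +
      Real.exp (t * (u - v) - t ^ 2 / 2 * (v + u)) ≤ 2 := by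
    convert exp_sub_add_exp_neg_sub_le_two (x := t * (v - u)) (s := t ^ 2 / 2 * (u + v)) ?_ using 3
    · ring
    · rw [mul_pow, mul_div_right_comm]
      gcongr
  rw [pairWeight, pairWeight, Prod.fst_swap, Prod.snd_swap, ← hu, ← hv,
    ← ENNReal.ofReal_add (Real.exp_nonneg _) (Real.exp_nonneg _)]
  exact (ENNReal.ofReal_le_ofReal hexp).trans_eq (ENNReal.ofReal_ofNat 2)

end PairWeight

section Symmetrization

variable {ι X : Type*} [Fintype ι]

/-- The double sample `w` with the two points of the `i`-th pair exchanged whenever `σ i` is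
`true`. -/
def swapAt (σ : ι → Bool) (w : ι → X × X) : ι → X × X :=
  fun i => bif σ i then (w i).swap else w i

lemma measurePreserving_swapAt [MeasurableSpace X] (Q : Measure X) [SigmaFinite Q]
    (σ : ι → Bool) :
    MeasurePreserving (swapAt σ) (Measure.pi fun _ : ι => Q.prod Q)
      (Measure.pi fun _ : ι => Q.prod Q) := by
  refine measurePreserving_pi (fun _ : ι => Q.prod Q) (fun _ : ι => Q.prod Q)
    (f := fun i p => bif σ i then p.swap else p) fun i => ?_
  cases σ i
  · exact MeasurePreserving.id _
  · exact Measure.measurePreserving_swap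

lemma lintegral_le_of_sum_swapAt_le [DecidableEq ι] [MeasurableSpace X] (Q : Measure X)
    [IsProbabilityMeasure Q] {G : (ι → X × X) → ℝ≥0∞} (hG : Measurable G) {N : ℝ≥0∞}
    (hN : ∀ w, ∑ σ : ι → Bool, G (swapAt σ w) ≤ 2 ^ Fintype.card ι * N) :
    ∫⁻ w, G w ∂(Measure.pi fun _ : ι => Q.prod Q) ≤ N := by
  set μ := Measure.pi fun _ : ι => Q.prod Q
  have hsum : 2 ^ Fintype.card ι * ∫⁻ w, G w ∂μ ≤ 2 ^ Fintype.card ι * N :=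
    calc 2 ^ Fintype.card ι * ∫⁻ w, G w ∂μ = ∑ σ : ι → Bool, ∫⁻ w, G (swapAt σ w) ∂μ := by
          simp [(measurePreserving_swapAt Q _).lintegral_comp hG, μ]
      _ = ∫⁻ w, ∑ σ : ι → Bool, G (swapAt σ w) ∂μ :=
          (lintegral_finsetSum _ fun σ _ => hG.comp (measurePreserving_swapAt Q σ).measurable).symm
      _ ≤ ∫⁻ _, 2 ^ Fintype.card ι * N ∂μ := lintegral_mono hN
      _ = 2 ^ Fintype.card ι * N := by rw [lintegral_const, measure_univ, mul_one]
  exact (ENNReal.mul_le_mul_iff_right (by simp) (by finiteness)).1 hsum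

open Classical in
/-- The points that occur in a double sample. -/
noncomputable def samplePoints (w : ι → X × X) : Finset X :=
  Finset.univ.image (fun i => (w i).1) ∪ Finset.univ.image (fun i => (w i).2)

lemma fst_mem_samplePoints (w : ι → X × X) (i : ι) : (w i).1 ∈ samplePoints w := by
  simp [samplePoints]

lemma snd_mem_samplePoints (w : ι → X × X) (i : ι) : (w i).2 ∈ samplePoints w := by
  simp [samplePoints]

lemma card_samplePoints_le (w : ι → X × X) : (samplePoints w).card ≤ 2 * Fintype.card ι := by
  classical
  rw [two_mul]
  exact (Finset.card_union_le _ _).trans (add_le_add Finset.card_image_le Finset.card_image_le)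

/-- The largest weight that a set of the family `𝓓` gives to a double sample. -/
noncomputable def maxWeight (t : ℝ) (𝓓 : Set (Set X)) (w : ι → X × X) : ℝ≥0∞ :=
  ⨆ D ∈ 𝓓, ∏ i, pairWeight t D (w i)

lemma prod_pairWeight_le_maxWeight (t : ℝ) {𝓓 : Set (Set X)} {D : Set X} (hD : D ∈ 𝓓)
    (w : ι → X × X) : ∏ i, pairWeight t D (w i) ≤ maxWeight t 𝓓 w :=
  le_iSup₂ (f := fun D (_ : D ∈ 𝓓) => ∏ i, pairWeight t D (w i)) D hD

lemma maxWeight_le_sum_traces (t : ℝ) (𝓓 : Set (Set X)) (P : Finset X) {w : ι → X × X}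
    (hw : ∀ i, (w i).1 ∈ P ∧ (w i).2 ∈ P) :
    maxWeight t 𝓓 w ≤ ∑ B ∈ traces 𝓓 P, ∏ i, pairWeight t B (w i) := by
  refine iSup₂_le fun D hD => ?_
  obtain ⟨B, hB, hBD⟩ := exists_mem_traces hD P
  have hDB {a : X} (ha : a ∈ P) : a ∈ D ↔ a ∈ (B : Set X) := (hBD a ha).symm
  have hprod : ∏ i, pairWeight t D (w i) = ∏ i, pairWeight t B (w i) :=
    Finset.prod_congr rfl fun i _ => pairWeight_congr t (hDB (hw i).1) (hDB (hw i).2)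
  have hle := Finset.single_le_sum_of_canonicallyOrdered
    (f := fun B : Finset X => ∏ i, pairWeight t B (w i)) hB
  exact hprod.trans_le hle

lemma sum_prod_pairWeight_swapAt_le [DecidableEq ι] (t : ℝ) (D : Set X) (w : ι → X × X) :
    ∑ σ : ι → Bool, ∏ i, pairWeight t D (swapAt σ w i) ≤ 2 ^ Fintype.card ι :=
  calc ∑ σ : ι → Bool, ∏ i, pairWeight t D (swapAt σ w i)
      = ∏ i, ∑ b : Bool, pairWeight t D (bif b then (w i).swap else w i) :=
        (Fintype.prod_sum fun i b => pairWeight t D (bif b then (w i).swap else w i)).symm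
    _ = ∏ i, (pairWeight t D (w i) + pairWeight t D (w i).swap) := by
        simp only [Fintype.sum_bool, cond_true, cond_false, add_comm]
    _ ≤ ∏ _i : ι, 2 :=
        Finset.prod_le_prod' fun i _ => pairWeight_add_pairWeight_swap_le_two t D (w i)
    _ = 2 ^ Fintype.card ι := by rw [Finset.prod_const, Finset.card_univ]

lemma sum_maxWeight_swapAt_le [DecidableEq ι] (t : ℝ) (𝓓 : Set (Set X)) (w : ι → X × X) :
    ∑ σ : ι → Bool, maxWeight t 𝓓 (swapAt σ w) ≤
      2 ^ Fintype.card ι * (traces 𝓓 (samplePoints w)).card := by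
  have hmem (σ : ι → Bool) (i : ι) :
      (swapAt σ w i).1 ∈ samplePoints w ∧ (swapAt σ w i).2 ∈ samplePoints w := by
    rw [swapAt]
    cases σ i
    · exact ⟨fst_mem_samplePoints w i, snd_mem_samplePoints w i⟩
    · exact ⟨snd_mem_samplePoints w i, fst_mem_samplePoints w i⟩
  calc ∑ σ : ι → Bool, maxWeight t 𝓓 (swapAt σ w)
      ≤ ∑ σ : ι → Bool, ∑ B ∈ traces 𝓓 (samplePoints w),
          ∏ i, pairWeight t B (swapAt σ w i) :=
        Finset.sum_le_sum fun σ _ => maxWeight_le_sum_traces t 𝓓 _ (hmem σ)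
    _ = ∑ B ∈ traces 𝓓 (samplePoints w),
          ∑ σ : ι → Bool, ∏ i, pairWeight t B (swapAt σ w i) := Finset.sum_comm
    _ ≤ ∑ _B ∈ traces 𝓓 (samplePoints w), 2 ^ Fintype.card ι :=
        Finset.sum_le_sum fun B _ => sum_prod_pairWeight_swapAt_le t (B : Set X) w
    _ = 2 ^ Fintype.card ι * (traces 𝓓 (samplePoints w)).card := by
        rw [Finset.sum_const, nsmul_eq_mul, mul_comm]

lemma lintegral_maxWeight_le [MeasurableSpace X] (Q : Measure X) [IsProbabilityMeasure Q] {t : ℝ}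
    {𝓓 : Set (Set X)} {N : ℕ}
    (hN : ∀ P : Finset X, P.card ≤ 2 * Fintype.card ι → (traces 𝓓 P).card ≤ N)
    (hmeas : Measurable (maxWeight (ι := ι) t 𝓓)) :
    ∫⁻ w, maxWeight t 𝓓 w ∂(Measure.pi fun _ : ι => Q.prod Q) ≤ N := by
  classical
  refine lintegral_le_of_sum_swapAt_le Q hmeas fun w => (sum_maxWeight_swapAt_le t 𝓓 w).trans ?_
  gcongr
  exact hN _ (card_samplePoints_le w)

end Symmetrization

section GhostSample

variable {ι X : Type*} [Fintype ι]

lemma sum_indicator_one_eq_ncard (D : Set X) (z : ι → X) :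
    ∑ i, D.indicator (1 : X → ℝ) (z i) = ({i | z i ∈ D} : Set ι).ncard := by
  classical
  simp only [Set.indicator_apply, Pi.one_apply, Finset.sum_boole, Set.ncard_eq_toFinset_card',
    Set.toFinset_ofPred]

variable [MeasurableSpace X]

lemma ofReal_exp_integral_le_lintegral (μ : Measure X) [IsProbabilityMeasure μ] {g : X → ℝ}
    (hg : Integrable g μ) :
    ENNReal.ofReal (Real.exp (∫ x, g x ∂μ)) ≤ ∫⁻ x, ENNReal.ofReal (Real.exp (g x)) ∂μ := by
  have hnonneg : 0 ≤ᵐ[μ] fun x => Real.exp (g x) := ae_of_all μ fun x => Real.exp_nonneg (g x)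
  by_cases hexp : Integrable (fun x => Real.exp (g x)) μ
  · rw [← ofReal_integral_eq_lintegral_ofReal hexp hnonneg]
    exact ENNReal.ofReal_le_ofReal <| convexOn_exp.map_integral_le Real.continuous_exp.continuousOn
      isClosed_univ (ae_of_all μ fun x => Set.mem_univ (g x)) hg hexp
  · have htop : ∫⁻ x, ENNReal.ofReal (Real.exp (g x)) ∂μ = ⊤ := by
      by_contra hne
      exact hexp <| (lintegral_ofReal_ne_top_iff_integrable
        (Real.continuous_exp.comp_aestronglyMeasurable hg.aestronglyMeasurable) hnonneg).1 hne
    exact htop ▸ le_top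

lemma ofReal_exp_le_lintegral_pairWeight (Q : Measure X) [IsProbabilityMeasure Q] (t : ℝ)
    {D : Set X} (hD : MeasurableSet D) (x : X) :
    ENNReal.ofReal (Real.exp ((t - t ^ 2 / 2) * Q.real D - (t + t ^ 2 / 2) * D.indicator 1 x)) ≤
      ∫⁻ y, pairWeight t D (x, y) ∂Q := by
  have hint : Integrable (D.indicator (1 : X → ℝ)) Q := (integrable_const 1).indicator hD
  have hintegral : ∫ y, ((t - t ^ 2 / 2) * D.indicator 1 y -
      (t + t ^ 2 / 2) * D.indicator 1 x) ∂Q =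
        (t - t ^ 2 / 2) * Q.real D - (t + t ^ 2 / 2) * D.indicator 1 x := by
    rw [integral_sub (hint.const_mul _) (integrable_const _), integral_const_mul,
      integral_indicator_one hD, integral_const, probReal_univ, one_smul]
  rw [← hintegral]
  refine (ofReal_exp_integral_le_lintegral Q
    ((hint.const_mul _).sub (integrable_const _))).trans_eq ?_
  refine lintegral_congr fun y => congrArg (fun r => ENNReal.ofReal (Real.exp r)) ?_
  simp only [Pi.sub_apply]
  ring

lemma lintegral_pi_prod {Y : ι → Type*} [∀ i, MeasurableSpace (Y i)] (μ : ∀ i, Measure (Y i))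
    [∀ i, IsProbabilityMeasure (μ i)] {g : ∀ i, Y i → ℝ≥0∞} (hg : ∀ i, Measurable (g i)) :
    ∫⁻ y, ∏ i, g i (y i) ∂(Measure.pi μ) = ∏ i, ∫⁻ y, g i y ∂(μ i) := by
  rw [ProbabilityTheory.lintegral_prod_eq_prod_lintegral_of_indepFun Finset.univ
    (fun i (y : ∀ i, Y i) => g i (y i))
    (ProbabilityTheory.iIndepFun_pi fun i => (hg i).aemeasurable)
    fun i => (hg i).comp (measurable_pi_apply i)]
  exact Finset.prod_congr rfl fun i _ => (measurePreserving_eval μ i).lintegral_comp (hg i)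

lemma ofReal_exp_le_lintegral_prod_pairWeight (Q : Measure X) [IsProbabilityMeasure Q] (t : ℝ)
    {D : Set X} (hD : MeasurableSet D) (z : ι → X) :
    ENNReal.ofReal (Real.exp ((t - t ^ 2 / 2) * (Fintype.card ι * Q.real D) -
        (t + t ^ 2 / 2) * ({i | z i ∈ D} : Set ι).ncard)) ≤
      ∫⁻ z', ∏ i, pairWeight t D (z i, z' i) ∂(Measure.pi fun _ : ι => Q) :=
  calc ENNReal.ofReal (Real.exp ((t - t ^ 2 / 2) * (Fintype.card ι * Q.real D) -
        (t + t ^ 2 / 2) * ({i | z i ∈ D} : Set ι).ncard))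
      = ∏ i, ENNReal.ofReal
          (Real.exp ((t - t ^ 2 / 2) * Q.real D - (t + t ^ 2 / 2) * D.indicator 1 (z i))) := by
        rw [← ENNReal.ofReal_prod_of_nonneg fun i _ => Real.exp_nonneg _, ← Real.exp_sum,
          Finset.sum_sub_distrib, ← Finset.mul_sum, ← Finset.mul_sum,
          sum_indicator_one_eq_ncard, Finset.sum_const, Finset.card_univ, nsmul_eq_mul]
    _ ≤ ∏ i, ∫⁻ y, pairWeight t D (z i, y) ∂Q :=
        Finset.prod_le_prod' fun i _ => ofReal_exp_le_lintegral_pairWeight Q t hD (z i)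
    _ = ∫⁻ z', ∏ i, pairWeight t D (z i, z' i) ∂(Measure.pi fun _ : ι => Q) :=
        (lintegral_pi_prod (fun _ => Q) fun i =>
          (measurable_pairWeight t hD).comp measurable_prodMk_left).symm

lemma lintegral_pi_prod_eq_lintegral_lintegral (Q : Measure X) [SigmaFinite Q]
    {G : (ι → X × X) → ℝ≥0∞} (hG : Measurable G) :
    ∫⁻ w, G w ∂(Measure.pi fun _ : ι => Q.prod Q) =
      ∫⁻ z, ∫⁻ z', G (fun i => (z i, z' i)) ∂(Measure.pi fun _ : ι => Q)
        ∂(Measure.pi fun _ : ι => Q) := by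
  have hpair : Measurable fun p : (ι → X) × (ι → X) => G fun i => (p.1 i, p.2 i) :=
    hG.comp (by fun_prop)
  rw [← lintegral_prod _ hpair.aemeasurable]
  exact (measurePreserving_arrowProdEquivProdArrow X X ι (fun _ => Q) fun _ => Q).lintegral_comp
    hpair

end GhostSample

section Deviation

variable {ι X : Type*} [Fintype ι] [MeasurableSpace X]

lemma ofReal_exp_le_lintegral_maxWeight (Q : Measure X) [IsProbabilityMeasure Q] {t : ℝ}
    (ht₀ : 0 ≤ t) (ht₂ : t ≤ 2) {𝓓 : Set (Set X)} {D : Set X} (hD : D ∈ 𝓓)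
    (hDmeas : MeasurableSet D) {p q : ℝ} (hq : q ≤ Q.real D) {z : ι → X}
    (hp : (({i | z i ∈ D} : Set ι).ncard : ℝ) ≤ Fintype.card ι * p) :
    ENNReal.ofReal
        (Real.exp (Fintype.card ι * ((t - t ^ 2 / 2) * q - (t + t ^ 2 / 2) * p))) ≤
      ∫⁻ z', maxWeight t 𝓓 (fun i => (z i, z' i)) ∂(Measure.pi fun _ : ι => Q) := by
  have hmass : (t - t ^ 2 / 2) * (Fintype.card ι * q) ≤
      (t - t ^ 2 / 2) * (Fintype.card ι * Q.real D) := by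
    have : 0 ≤ t - t ^ 2 / 2 := by nlinarith
    gcongr
  have hcount : (t + t ^ 2 / 2) * ({i | z i ∈ D} : Set ι).ncard ≤
      (t + t ^ 2 / 2) * (Fintype.card ι * p) := by gcongr
  calc ENNReal.ofReal
        (Real.exp (Fintype.card ι * ((t - t ^ 2 / 2) * q - (t + t ^ 2 / 2) * p)))
      ≤ ENNReal.ofReal (Real.exp ((t - t ^ 2 / 2) * (Fintype.card ι * Q.real D) -
          (t + t ^ 2 / 2) * ({i | z i ∈ D} : Set ι).ncard)) := by
        refine ENNReal.ofReal_le_ofReal (Real.exp_le_exp.2 ?_)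
        linear_combination hmass + hcount
    _ ≤ ∫⁻ z', ∏ i, pairWeight t D (z i, z' i) ∂(Measure.pi fun _ : ι => Q) :=
        ofReal_exp_le_lintegral_prod_pairWeight Q t hDmeas z
    _ ≤ ∫⁻ z', maxWeight t 𝓓 (fun i => (z i, z' i)) ∂(Measure.pi fun _ : ι => Q) :=
        lintegral_mono fun z' => prod_pairWeight_le_maxWeight t hD _

/- The event may be non-measurable: Markov's inequality is applied to the ghost-sample average of
`maxWeight`, a superlevel set of which contains it. -/
theorem measureReal_exists_mem_le_mul_exp (Q : Measure X) [IsProbabilityMeasure Q]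
    {𝓓 : Set (Set X)} (h𝓓 : ∀ D ∈ 𝓓, MeasurableSet D) {N : ℕ}
    (hN : ∀ P : Finset X, P.card ≤ 2 * Fintype.card ι → (traces 𝓓 P).card ≤ N)
    {t : ℝ} (ht₀ : 0 ≤ t) (ht₂ : t ≤ 2) (hmeas : Measurable (maxWeight (ι := ι) t 𝓓)) (p q : ℝ) :
    (Measure.pi fun _ : ι => Q).real {z | ∃ D ∈ 𝓓, q ≤ Q.real D ∧
        (({i | z i ∈ D} : Set ι).ncard : ℝ) ≤ Fintype.card ι * p} ≤
      N * Real.exp (-(Fintype.card ι * ((t - t ^ 2 / 2) * q - (t + t ^ 2 / 2) * p))) := by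
  set μ := Measure.pi fun _ : ι => Q
  set A := {z : ι → X | ∃ D ∈ 𝓓, q ≤ Q.real D ∧
    (({i | z i ∈ D} : Set ι).ncard : ℝ) ≤ Fintype.card ι * p}
  set r : ℝ := Fintype.card ι * ((t - t ^ 2 / 2) * q - (t + t ^ 2 / 2) * p)
  set F : (ι → X) → ℝ≥0∞ := fun z => ∫⁻ z', maxWeight t 𝓓 (fun i => (z i, z' i)) ∂μ
  have hF : Measurable F :=
    (hmeas.comp (g := maxWeight t 𝓓)
      (f := fun (x : (ι → X) × (ι → X)) i => (x.1 i, x.2 i)) (by fun_prop)).lintegral_prod_right'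
  have hA : A ⊆ {z | ENNReal.ofReal (Real.exp r) ≤ F z} := by
    rintro z ⟨D, hD, hq, hp⟩
    exact ofReal_exp_le_lintegral_maxWeight Q ht₀ ht₂ hD (h𝓓 D hD) hq hp
  have hmarkov : ENNReal.ofReal (Real.exp r) * μ A ≤ N :=
    calc ENNReal.ofReal (Real.exp r) * μ A
        ≤ ENNReal.ofReal (Real.exp r) * μ {z | ENNReal.ofReal (Real.exp r) ≤ F z} := by gcongr
      _ ≤ ∫⁻ z, F z ∂μ := mul_meas_ge_le_lintegral hF _
      _ = ∫⁻ w, maxWeight t 𝓓 w ∂(Measure.pi fun _ : ι => Q.prod Q) :=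
          (lintegral_pi_prod_eq_lintegral_lintegral Q hmeas).symm
      _ ≤ N := lintegral_maxWeight_le Q hN hmeas
  have hreal : Real.exp r * μ.real A ≤ N := by
    simpa [Measure.real, ENNReal.toReal_mul, (Real.exp_nonneg r)] using
      ENNReal.toReal_mono (ENNReal.natCast_ne_top N) hmarkov
  rwa [Real.exp_neg, ← div_eq_mul_inv, le_div_iff₀' (Real.exp_pos r)]

end Deviation

lemma mul_add_le_of_div_add_sqrt_le {n l L T ε : ℝ} (hn : 0 < n) (hl : 0 ≤ l) (hL : 0 ≤ L)
    (hT : 0 ≤ T) (hε : 8 * l / n + √(8 * L / n) ≤ ε) (hTε : T ≤ 1 / ε) :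
    T * L + l ≤ n * ε / 8 := by
  set b := √(8 * L / n)
  have hb₀ : 0 ≤ b := Real.sqrt_nonneg _
  have hb : n * b ^ 2 = 8 * L := by
    rw [Real.sq_sqrt (by positivity), mul_div_cancel₀ _ hn.ne']
  have hbε : b ≤ ε := (le_add_of_nonneg_left (by positivity)).trans hε
  have hTb : T * b ≤ 1 :=
    calc T * b ≤ 1 / ε * ε := mul_le_mul hTε hbε hb₀ (hT.trans hTε)
      _ ≤ 1 := by rw [one_div_mul_eq_div]; exact div_self_le_one ε
  have hTL : T * L ≤ n * b / 8 :=
    calc T * L = T * b * (n * b / 8) := by linear_combination (-T / 8) * hb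
      _ ≤ n * b / 8 := mul_le_of_le_one_left (by positivity) hTb
  have hnε : 8 * l + n * b ≤ n * ε := by
    have := mul_le_mul_of_nonneg_left hε hn.le
    rwa [mul_add, mul_div_cancel₀ _ hn.ne'] at this
  linarith

lemma pow_pow_mul_exp_neg_le {n d T : ℕ} (hn : 1 ≤ n) {δ ε : ℝ} (hδ : 0 < δ) (hδ₁ : δ ≤ 1)
    (hε : 8 * Real.log (1 / δ) / n + √(8 * (d : ℝ) * Real.log (2 * n) / n) ≤ ε)
    (hTε : (T : ℝ) ≤ 1 / ε) :
    ((2 * n : ℝ) ^ d) ^ T * Real.exp (-(n * ε / 8)) ≤ δ := by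
  have hn₁ : (1 : ℝ) ≤ n := mod_cast hn
  have hlog : 0 ≤ Real.log (2 * n) := Real.log_nonneg (by linarith)
  have hexponent : T * (d * Real.log (2 * n)) + Real.log (1 / δ) ≤ n * ε / 8 :=
    mul_add_le_of_div_add_sqrt_le (by positivity) (Real.log_nonneg (one_le_one_div hδ hδ₁))
      (by positivity) (by positivity) (by rwa [← mul_assoc]) hTε
  calc ((2 * n : ℝ) ^ d) ^ T * Real.exp (-(n * ε / 8))
      = Real.exp (T * (d * Real.log (2 * n)) - n * ε / 8) := by
        rw [sub_eq_add_neg, Real.exp_add, Real.exp_nat_mul, Real.exp_nat_mul,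
          Real.exp_log (by positivity)]
    _ ≤ Real.exp (-Real.log (1 / δ)) := Real.exp_le_exp.2 (by linarith)
    _ = δ := by rw [one_div, Real.log_inv, neg_neg, Real.exp_log hδ]

theorem stmt8_general {X : Type*} [Countable X] [MeasurableSpace X] [MeasurableSingletonClass X]
    (C : Set (X → Bool)) (d : ℕ) (hd : 2 ≤ d) (hC : ∀ A : Finset X, Shatters C A → A.card ≤ d)
    (n : ℕ) (hn : 1 ≤ n) (δ : ℝ) (hδ : 0 < δ) (ε : ℝ)
    (hε : 8 * Real.log (1 / δ) / n + √(8 * (d : ℝ) * Real.log (2 * n) / n) ≤ ε)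
    (T : ℕ) (hTε : (T : ℝ) ≤ 1 / ε) (f h : X → Bool)
    (Q : Measure X) [IsProbabilityMeasure Q] :
    (Measure.pi fun _ : Fin n => Q).real
      {z : Fin n → X | ∃ c : Fin T → X → Bool, (∀ i, c i ∈ C) ∧
        2 * ε < Q.real {a | h a ≠ f a ∧ ∀ j, c j a = h a} ∧
        (Set.ncard {i : Fin n | h (z i) ≠ f (z i) ∧ ∀ j, c j (z i) = h (z i)} : ℝ) / n ≤ ε} ≤
      δ := by
  rcases le_or_gt 1 δ with hδ₁ | hδ₁
  · exact measureReal_le_one.trans hδ₁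
  have hgrowth (P : Finset X) (hP : P.card ≤ 2 * Fintype.card (Fin n)) :
      (traces (errorSets C f h (Fin T)) P).card ≤ ((2 * n) ^ d) ^ T := by
    rw [Fintype.card_fin] at hP
    refine (card_traces_errorSets_le C f h (Fin T) P).trans ?_
    rw [Fintype.card_fin]
    gcongr
    exact card_traces_positiveSets_le_pow hd hC (by omega) hP
  have hdeviation := measureReal_exists_mem_le_mul_exp (ι := Fin n) Q
    (fun D _ => D.to_countable.measurableSet) hgrowth (t := 1 / 2) (by norm_num) (by norm_num)
    (measurable_of_countable _) ε (2 * ε)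
  refine le_trans (measureReal_mono ?_) (hdeviation.trans ?_)
  · rintro z ⟨c, hc, hQ, hz⟩
    rw [div_le_iff₀' (by positivity)] at hz
    exact ⟨_, ⟨c, hc, rfl⟩, hQ.le, by rwa [Fintype.card_fin]⟩
  · have hexponent : (n : ℝ) * ((1 / 2 - (1 / 2) ^ 2 / 2) * (2 * ε) -
        (1 / 2 + (1 / 2) ^ 2 / 2) * ε) = n * ε / 8 := by ring
    rw [Fintype.card_fin, hexponent]
    exact_mod_cast pow_pow_mul_exp_neg_le hn hδ hδ₁.le hε hTε

/-- for a class `C` of VC dimension `d ≥ 2`, `n ≥ 1`, `δ > 0`,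
`ε ≥ 8ln(8/δ)/n + √(8d·ln(2n)/n)`, a positive integer `T ≤ 1/ε`, `f, h ∈ C`, and any
distribution `Q` on `X`: the probability over `z ∼ Qⁿ` that some `c ∈ C^T` has
`err_Q(h|_{S(h,c)}, f) > 2ε` and `err_z(h|_{S(h,c)}, f) ≤ ε` is at most `δ`. -/
theorem stmt8 {X : Type*} [Countable X] [MeasurableSpace X] [MeasurableSingletonClass X]
    (C : Set (X → Bool)) (d : ℕ) (hd : 2 ≤ d) (hC : VCDim C d)
    (n : ℕ) (hn : 1 ≤ n) (δ : ℝ) (hδ : 0 < δ) (ε : ℝ)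
    (hε : 8 * Real.log (8 / δ) / n + Real.sqrt (8 * (d : ℝ) * Real.log (2 * n) / n) ≤ ε)
    (T : ℕ) (hT : 1 ≤ T) (hTε : (T : ℝ) ≤ 1 / ε)
    (f h : X → Bool) (hf : f ∈ C) (hh : h ∈ C)
    (Q : Measure X) [IsProbabilityMeasure Q] :
    ((Measure.pi fun _ : Fin n => Q)
      {z : Fin n → X | ∃ c : Fin T → X → Bool, (∀ i, c i ∈ C) ∧
        2 * ε < (Q {a : X | h a ≠ f a ∧ a ∈ {a : X | ∀ j, c j a = h a}}).toReal ∧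
        (Set.ncard {i : Fin n | h (z i) ≠ f (z i) ∧ z i ∈ {a : X | ∀ j, c j a = h a}} : ℝ) / n
          ≤ ε}).toReal ≤ δ := by
  have hlog : Real.log (1 / δ) ≤ Real.log (8 / δ) := by gcongr; norm_num
  exact stmt8_general C d hd hC.2 n hn δ hδ ε (hε.trans' (by gcongr)) T hTε f h Q
end
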